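/- For every pair of integers p, q ≥ 2 there exists an injective group homomorphism Ψ : F(p) → F(q) which is a quasi-isometric embedding: there is a constant C ≥ 1 such that for all x ∈ F(p), (1/C)·|x|_p ≤ |Ψ(x)|_q ≤ C·|x|_p. -/

import Mathlib

open scoped BigOperators

/-- Relators of Thompson's group `F(p)`: `x_i⁻¹ x_j x_i x_{j+p-1}⁻¹` for `i < j`. -/
def thompsonRels (p : ℕ) : Set (FreeGroup ℕ) :=
  { rel | ∃ i j : ℕ, i < j ∧
      rel = (FreeGroup.of i)⁻¹ * FreeGroup.of j * FreeGroup.of i *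
        (FreeGroup.of (j + p - 1))⁻¹ }

/-- Thompson's group `F(p)`, presented with generators `x_i` (`i : ℕ`) and relations
`x_i⁻¹ · x_j · x_i = x_{j+p-1}` for `i < j`. -/
def FP (p : ℕ) : Type := PresentedGroup (thompsonRels p)

instance (p : ℕ) : Group (FP p) :=
  inferInstanceAs (Group (PresentedGroup (thompsonRels p)))

/-- The generator `x_i` of `F(p)`. -/
def xg (p : ℕ) (i : ℕ) : FP p := PresentedGroup.of (rels := thompsonRels p) i

/-- Word length of `x : G` with respect to a set `S` of generators: the least length of a
word in elements of `S ∪ S⁻¹` whose product is `x`. -/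
noncomputable def wordLength {G : Type*} [Group G] (S : Set G) (x : G) : ℕ :=
  sInf { n : ℕ | ∃ w : List G, w.length = n ∧ (∀ g ∈ w, g ∈ S ∨ g⁻¹ ∈ S) ∧ w.prod = x }

/-- The word length `|x|_p` on `F(p)`, with respect to the generators `x_0, …, x_{p-1}`. -/
noncomputable def wlen (p : ℕ) (x : FP p) : ℕ :=
  wordLength { g : FP p | ∃ i, i < p ∧ g = xg p i } x

/-- The data of a candidate normal form
`x_{i₁}^{r₁} ⋯ x_{iₙ}^{rₙ} · x_{jₘ}^{-sₘ} ⋯ x_{j₁}^{-s₁}` in `F(p)`. -/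
structure NFData (p : ℕ) where
  n : ℕ
  m : ℕ
  i : Fin n → ℕ
  r : Fin n → ℕ
  j : Fin m → ℕ
  s : Fin m → ℕ

namespace NFData

variable {p : ℕ}

/-- The element of `F(p)` represented by the normal form data, namely
`x_{i₁}^{r₁} ⋯ x_{iₙ}^{rₙ} · (x_{j₁}^{s₁} ⋯ x_{jₘ}^{sₘ})⁻¹`. -/
def elem (d : NFData p) : FP p :=
  (List.ofFn fun k => xg p (d.i k) ^ d.r k).prod *
    ((List.ofFn fun l => xg p (d.j l) ^ d.s l).prod)⁻¹

/-- The generator with index `a` occurs in `d` (with positive or negative exponent). -/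
def Occurs (d : NFData p) (a : ℕ) : Prop :=
  (∃ k, d.i k = a) ∨ (∃ l, d.j l = a)

/-- `d` is a normal form of `x ∈ F(p)`: the indices are strictly increasing, the exponents
are at least `1`, `iₙ ≠ jₘ` when both parts are nonempty, whenever a generator and its
inverse both occur one of the following `p-1` generators (or its inverse) occurs as well,
and the corresponding product equals `x`. -/
def IsNormalFormOf (d : NFData p) (x : FP p) : Prop :=
  StrictMono d.i ∧ StrictMono d.j ∧
    (∀ k, 1 ≤ d.r k) ∧ (∀ l, 1 ≤ d.s l) ∧
    (∀ (hn : 0 < d.n) (hm : 0 < d.m),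
      d.i ⟨d.n - 1, Nat.sub_lt hn Nat.one_pos⟩ ≠ d.j ⟨d.m - 1, Nat.sub_lt hm Nat.one_pos⟩) ∧
    (∀ a : ℕ, (∃ k, d.i k = a) → (∃ l, d.j l = a) →
      ∃ b : ℕ, a < b ∧ b ≤ a + p - 1 ∧ d.Occurs b) ∧
    x = d.elem

/-- The quantity `D(x) = r₁ + ⋯ + rₙ + s₁ + ⋯ + sₘ + iₙ + jₘ` (the terms `iₙ`, `jₘ` being
omitted when `n = 0`, resp. `m = 0`). -/
def D (d : NFData p) : ℕ :=
  (∑ k, d.r k) + (∑ l, d.s l) +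
    (if hn : 0 < d.n then d.i ⟨d.n - 1, Nat.sub_lt hn Nat.one_pos⟩ else 0) +
    (if hm : 0 < d.m then d.j ⟨d.m - 1, Nat.sub_lt hm Nat.one_pos⟩ else 0)

end NFData

/-- The tail sum `r_k + r_{k+1} + ⋯ + r_n`. -/
def tailSum {n : ℕ} (r : Fin n → ℕ) (k : Fin n) : ℕ :=
  ∑ l ∈ Finset.univ.filter (fun l => k ≤ l), r l
/-- `N(x)` associated to a normal form in `F(2)` (Theorem 3):
the maximum of `i_k + r_k + ⋯ + r_n + 1` and `j_l + s_l + ⋯ + s_m + 1`. -/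
def NFData.N2 (d : NFData 2) : ℕ :=
  max (Finset.univ.sup fun k => d.i k + tailSum d.r k + 1)
      (Finset.univ.sup fun l => d.j l + tailSum d.s l + 1)

/-- `N(x)` associated to a normal form in `F(p)` (Theorem 6):
the maximum of `⌊i_k/(p-1)⌋ + r_k + ⋯ + r_n + 1` and `⌊j_l/(p-1)⌋ + s_l + ⋯ + s_m + 1`. -/
def NFData.Ngen {p : ℕ} (d : NFData p) : ℕ :=
  max (Finset.univ.sup fun k => d.i k / (p - 1) + tailSum d.r k + 1)
      (Finset.univ.sup fun l => d.j l / (p - 1) + tailSum d.s l + 1)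

/-- `N(x) = max { i_k + r_k + ⋯ + r_n + 1 }` for a positive word (Proposition 2). -/
def posN {n : ℕ} (i r : Fin n → ℕ) : ℕ :=
  Finset.univ.sup fun k => i k + tailSum r k + 1

/-- `N₁(x) = max { ⌊i_k/(p-1)⌋ + r_k + ⋯ + r_n + 1 }` (Proposition 4). -/
def posN1 (p : ℕ) {n : ℕ} (i r : Fin n → ℕ) : ℕ :=
  Finset.univ.sup fun k => i k / (p - 1) + tailSum r k + 1

/-- `N₂(x) = max { i_k + (p-1)(r_k + ⋯ + r_n) + 1 }` (Proposition 5). -/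
def posN2 (p : ℕ) {n : ℕ} (i r : Fin n → ℕ) : ℕ :=
  Finset.univ.sup fun k => i k + (p - 1) * tailSum r k + 1

/-- `x ∈ ℤ[1/p]`. -/
def IsPAdicRational (p : ℕ) (x : ℝ) : Prop :=
  ∃ (a : ℤ) (n : ℕ), x = (a : ℝ) / (p : ℝ) ^ n

/-- Thompson's group `F(p)` realized as a set of permutations of `ℝ`: orientation-preserving
piecewise-linear homeomorphisms of `[0,1]` (extended by the identity outside `[0,1]`) with
finitely many breakpoints, all in `ℤ[1/p]`, whose slopes are integer powers of `p`. -/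
def PLSet (p : ℕ) : Set (Equiv.Perm ℝ) :=
  { f | Monotone f ∧ (∀ t : ℝ, t ≤ 0 → f t = t) ∧ (∀ t : ℝ, 1 ≤ t → f t = t) ∧
    ∃ B : Finset ℝ, (∀ b ∈ B, IsPAdicRational p b) ∧
      ∀ t : ℝ, t ∉ (B : Set ℝ) →
        ∃ ε > (0 : ℝ), ∃ (k : ℤ) (c : ℝ), ∀ s : ℝ, |s - t| < ε → f s = (p : ℝ) ^ k * s + c }

/-- The map `Φ_p` on homeomorphisms: `(Φ_p f)(t) = t` for `t ≤ 1 - 1/p`, and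
`(Φ_p f)(t) = ((p-1) + f(pt - (p-1)))/p` for `t ≥ 1 - 1/p`. -/
noncomputable def PhiMap (p : ℕ) (f : ℝ → ℝ) : ℝ → ℝ := fun t =>
  if t ≤ 1 - 1 / (p : ℝ) then t
  else (((p : ℝ) - 1) + f ((p : ℝ) * t - ((p : ℝ) - 1))) / (p : ℝ)

/-- The piecewise-linear homeomorphism `f_i` of `ℝ` corresponding to the generator `x_i`
of `F(p)`. -/
noncomputable def fgen (p : ℕ) (i : ℕ) : ℝ → ℝ := fun t =>
  if t ≤ (i : ℝ) then t
  else if t ≤ (i : ℝ) + 1 then (p : ℝ) * t + (i : ℝ) * (1 - (p : ℝ))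
  else t + (p : ℝ) - 1

/-! ### Basic relations and words -/

theorem xg_rel (p i j : ℕ) (h : i < j) : xg p j * xg p i = xg p i * xg p (j + p - 1) := by
  have h1 : PresentedGroup.mk (thompsonRels p)
      ((FreeGroup.of i)⁻¹ * FreeGroup.of j * FreeGroup.of i * (FreeGroup.of (j + p - 1))⁻¹) = 1 :=
    PresentedGroup.one_of_mem ⟨i, j, h, rfl⟩
  have h2 : (xg p i)⁻¹ * xg p j * xg p i * (xg p (j + p - 1))⁻¹ = 1 := h1
  rw [mul_inv_eq_one, mul_assoc, inv_mul_eq_iff_eq_mul] at h2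
  exact h2

/-- homomorphisms out of `FP p`. -/
def FPlift (p : ℕ) {G : Type*} [Group G] (f : ℕ → G)
    (hf : ∀ i j, i < j → f j * f i = f i * f (j + p - 1)) : FP p →* G :=
  PresentedGroup.toGroup (rels := thompsonRels p) (f := f) (by
    rintro r ⟨i, j, h, rfl⟩
    simp only [map_mul, map_inv, FreeGroup.lift_apply_of]
    rw [mul_inv_eq_one, mul_assoc, inv_mul_eq_iff_eq_mul]
    exact hf i j h)

theorem FPlift_xg (p : ℕ) {G : Type*} [Group G] (f : ℕ → G)
    (hf : ∀ i j, i < j → f j * f i = f i * f (j + p - 1)) (i : ℕ) :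
    FPlift p f hf (xg p i) = f i :=
  PresentedGroup.toGroup.of _

/-- the quotient map onto `FP p` -/
def FPmk (p : ℕ) : FreeGroup ℕ →* FP p := PresentedGroup.mk (thompsonRels p)

theorem FP_induction {p : ℕ} {C : FP p → Prop} (h1 : C 1)
    (hx : ∀ i x, C x → C (xg p i * x)) (hxi : ∀ i x, C x → C ((xg p i)⁻¹ * x)) (x : FP p) :
    C x := by
  obtain ⟨w, rfl⟩ := PresentedGroup.mk_surjective (thompsonRels p) x
  suffices h : ∀ (w : FreeGroup ℕ) (y : FP p), C y →
      C (FPmk p w * y) by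
    have := h w 1 h1
    rwa [mul_one] at this
  intro w
  induction w using FreeGroup.induction_on with
  | C1 => intro y hy; rw [map_one]; rwa [one_mul]
  | of i => intro y hy; exact hx i y hy
  | inv_of i _ => intro y hy; rw [map_inv]; exact hxi i y hy
  | mul a b ha hb =>
    intro y hy
    rw [map_mul]
    have := ha _ (hb y hy)
    rw [← mul_assoc] at this
    exact this

/-- `x` is a product of at most `n` generators. -/
def IsW (p n : ℕ) (x : FP p) : Prop :=
  ∃ w : List (FP p), w.length ≤ n ∧
    (∀ g ∈ w, g ∈ { g : FP p | ∃ i, i < p ∧ g = xg p i } ∨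
      g⁻¹ ∈ { g : FP p | ∃ i, i < p ∧ g = xg p i }) ∧ w.prod = x

theorem IsW.mono {p n m : ℕ} {x : FP p} (h : IsW p n x) (hnm : n ≤ m) : IsW p m x := by
  obtain ⟨w, h1, h2⟩ := h
  exact ⟨w, h1.trans hnm, h2⟩

theorem IsW.one {p n : ℕ} : IsW p n 1 := ⟨[], by simp, by simp, rfl⟩

theorem IsW.mul {p n m : ℕ} {x y : FP p} (hx : IsW p n x) (hy : IsW p m y) :
    IsW p (n + m) (x * y) := by
  obtain ⟨w, h1, h2, rfl⟩ := hx
  obtain ⟨v, h3, h4, rfl⟩ := hy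
  refine ⟨w ++ v, by simp; omega, ?_, by simp⟩
  intro g hg
  rcases List.mem_append.1 hg with h | h
  · exact h2 g h
  · exact h4 g h

theorem IsW.inv {p n : ℕ} {x : FP p} (hx : IsW p n x) : IsW p n x⁻¹ := by
  obtain ⟨w, h1, h2, rfl⟩ := hx
  refine ⟨(w.map (·⁻¹)).reverse, by simpa using h1, ?_, by rw [List.prod_inv_reverse]⟩
  intro g hg
  simp only [List.mem_reverse, List.mem_map] at hg
  obtain ⟨a, ha, rfl⟩ := hg
  rw [inv_inv]
  exact (h2 a ha).symm

theorem IsW.gen {p i : ℕ} (h : i < p) : IsW p 1 (xg p i) :=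
  ⟨[xg p i], by simp, by simp only [List.mem_singleton, forall_eq]; exact Or.inl ⟨i, h, rfl⟩,
    by simp⟩

theorem IsW.pow {p n : ℕ} {x : FP p} (hx : IsW p n x) (k : ℕ) : IsW p (k * n) (x ^ k) := by
  induction k with
  | zero => simpa using IsW.one
  | succ k ih => rw [pow_succ]; exact (ih.mul hx).mono (by rw [Nat.succ_mul])

theorem wlen_le_of_isW {p n : ℕ} {x : FP p} (h : IsW p n x) : wlen p x ≤ n := by
  obtain ⟨w, h1, h2⟩ := h
  exact le_trans (Nat.sInf_le (show w.length ∈ { n : ℕ | ∃ w : List (FP p), w.length = n ∧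
    (∀ g ∈ w, g ∈ { g : FP p | ∃ i, i < p ∧ g = xg p i } ∨
      g⁻¹ ∈ { g : FP p | ∃ i, i < p ∧ g = xg p i }) ∧ w.prod = x } from ⟨w, rfl, h2⟩)) h1

theorem isW_wlen {p n : ℕ} {x : FP p} (h : IsW p n x) : IsW p (wlen p x) x := by
  obtain ⟨w, h1, h2⟩ := h
  obtain ⟨v, h3, h4⟩ := Nat.sInf_mem (s := { n : ℕ | ∃ w : List (FP p), w.length = n ∧
    (∀ g ∈ w, g ∈ { g : FP p | ∃ i, i < p ∧ g = xg p i } ∨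
      g⁻¹ ∈ { g : FP p | ∃ i, i < p ∧ g = xg p i }) ∧ w.prod = x }) ⟨_, w, rfl, h2⟩
  exact ⟨v, h3.le, h4⟩

/-- induction principle on words -/
theorem IsW.induction {p : ℕ} {C : ℕ → FP p → Prop} (h1 : C 0 1)
    (hmono : ∀ n x, C n x → C (n + 1) x)
    (hx : ∀ n i x, i < p → C n x → C (n + 1) (xg p i * x))
    (hxi : ∀ n i x, i < p → C n x → C (n + 1) ((xg p i)⁻¹ * x)) {n : ℕ} {x : FP p}
    (h : IsW p n x) : C n x := by
  obtain ⟨w, hl, h2, rfl⟩ := h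
  suffices h : C w.length w.prod by
    exact Nat.le_induction h (fun n _ hn => hmono n _ hn) n hl
  clear hl
  induction w with
  | nil => exact h1
  | cons g w ih =>
    have ih := ih (fun g hg => h2 g (List.mem_cons_of_mem _ hg))
    rw [List.prod_cons, List.length_cons]
    rcases h2 g (by simp) with ⟨i, hi, rfl⟩ | ⟨i, hi, h⟩
    · exact hx _ _ _ hi ih
    · rw [inv_eq_iff_eq_inv] at h
      subst h
      exact hxi _ _ _ hi ih

/-! ### Positive words -/

/-- the positive element given by a list of indices -/
def pr (p : ℕ) (L : List ℕ) : FP p := (L.map (xg p)).prod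

theorem pr_nil (p : ℕ) : pr p [] = 1 := rfl
theorem pr_cons (p a : ℕ) (L : List ℕ) : pr p (a :: L) = xg p a * pr p L := by simp [pr]
theorem pr_append (p : ℕ) (L M : List ℕ) : pr p (L ++ M) = pr p L * pr p M := by simp [pr]
theorem pr_concat (p a : ℕ) (L : List ℕ) : pr p (L ++ [a]) = pr p L * xg p a := by simp [pr]

theorem inv_mul_pr (p : ℕ) (L : List ℕ) : ∀ k : ℕ, ∃ P Q : List ℕ,
    (xg p k)⁻¹ * pr p L = pr p P * (pr p Q)⁻¹ := by
  induction L with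
  | nil => intro k; exact ⟨[], [k], by simp [pr]⟩
  | cons a L ih =>
    intro k
    rcases lt_trichotomy a k with h | rfl | h
    · obtain ⟨P, Q, hPQ⟩ := ih (k + p - 1)
      refine ⟨a :: P, Q, ?_⟩
      rw [pr_cons, pr_cons, mul_assoc, ← hPQ, inv_mul_eq_iff_eq_mul, ← mul_assoc, ← mul_assoc,
        xg_rel p a k h, mul_inv_cancel_right]
    · exact ⟨L, [], by simp [pr_cons, pr_nil]⟩
    · obtain ⟨P, Q, hPQ⟩ := ih k
      refine ⟨(a + p - 1) :: P, Q, ?_⟩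
      rw [pr_cons, pr_cons, mul_assoc, ← hPQ, inv_mul_eq_iff_eq_mul, ← mul_assoc, ← mul_assoc,
        ← xg_rel p k a h, mul_inv_cancel_right]

theorem exists_frac (p : ℕ) (x : FP p) : ∃ P Q : List ℕ, x = pr p P * (pr p Q)⁻¹ := by
  induction x using FP_induction with
  | h1 => exact ⟨[], [], by simp [pr]⟩
  | hx i x ih =>
    obtain ⟨P, Q, rfl⟩ := ih
    exact ⟨i :: P, Q, by rw [pr_cons, mul_assoc]⟩
  | hxi i x ih =>
    obtain ⟨P, Q, rfl⟩ := ih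
    obtain ⟨P', Q', h⟩ := inv_mul_pr p P i
    exact ⟨P', Q ++ Q', by rw [← mul_assoc, h, pr_append, mul_inv_rev, mul_assoc]⟩

theorem pr_insert (p : ℕ) (L : List ℕ) : ∀ a : ℕ, L.Pairwise (· ≤ ·) → ∃ L' : List ℕ,
    L'.Pairwise (· ≤ ·) ∧ L'.length = L.length + 1 ∧ xg p a * pr p L = pr p L' ∧
    ∀ c, c ≤ a → (∀ b ∈ L, c ≤ b) → ∀ b ∈ L', c ≤ b := by
  induction L with
  | nil => intro a _; exact ⟨[a], by simp, by simp, by simp [pr], by simp⟩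
  | cons b L ih =>
    intro a hL
    rw [List.pairwise_cons] at hL
    by_cases hab : a ≤ b
    · refine ⟨a :: b :: L, ?_, by simp, by simp [pr], ?_⟩
      · simp only [List.pairwise_cons, List.mem_cons, forall_eq_or_imp]
        exact ⟨⟨hab, fun c hc => hab.trans (hL.1 c hc)⟩, hL.1, hL.2⟩
      · intro c hc h d hd
        rcases List.mem_cons.1 hd with rfl | hd
        · exact hc
        · exact h d hd
    · push Not at hab
      obtain ⟨L', h1, h2, h3, h4⟩ := ih (a + p - 1) hL.2
      refine ⟨b :: L', ?_, by simp [h2], ?_, ?_⟩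
      · rw [List.pairwise_cons]
        exact ⟨h4 b (by omega) hL.1, h1⟩
      · rw [pr_cons, pr_cons, ← h3, ← mul_assoc, ← mul_assoc, xg_rel p b a hab]
      · intro c hc h d hd
        rcases List.mem_cons.1 hd with rfl | hd
        · exact h _ (by simp)
        · exact h4 c (by have := h b (by simp); omega)
            (fun e he => h e (List.mem_cons_of_mem _ he)) d hd

theorem pr_sort (p : ℕ) (L : List ℕ) : ∃ L' : List ℕ,
    L'.Pairwise (· ≤ ·) ∧ L'.length = L.length ∧ pr p L = pr p L' := by
  induction L with
  | nil => exact ⟨[], by simp, rfl, rfl⟩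
  | cons a L ih =>
    obtain ⟨L', h1, h2, h3⟩ := ih
    obtain ⟨M, h4, h5, h6, _⟩ := pr_insert p L' a h1
    exact ⟨M, h4, by simp [h5, h2], by rw [pr_cons, h3, h6]⟩

/-- conjugating by powers of `x_0` -/
theorem xg_conj (p : ℕ) (hp : 2 ≤ p) (r k : ℕ) (hr : 1 ≤ r) :
    xg p 0 ^ k * xg p (r + k * (p - 1)) = xg p r * xg p 0 ^ k := by
  induction k with
  | zero => simp
  | succ k ih =>
    have := xg_rel p 0 (r + k * (p - 1)) (by omega)
    have e : r + (k + 1) * (p - 1) = r + k * (p - 1) + p - 1 := by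
      rw [Nat.succ_mul]; omega
    rw [e, pow_succ, mul_assoc, ← this, ← mul_assoc, ih, mul_assoc]

/-- `κ(a)`, the power of `x_0` used to conjugate. -/
def kap (p a : ℕ) : ℕ := (a - 1) / (p - 1)

theorem xg_kap (p : ℕ) (hp : 2 ≤ p) (a : ℕ) : ∃ r, r < p ∧
    xg p 0 ^ (kap p a) * xg p a = xg p r * xg p 0 ^ (kap p a) := by
  rcases Nat.eq_zero_or_pos a with rfl | ha
  · exact ⟨0, by omega, by simp [kap]⟩
  · refine ⟨1 + (a - 1) % (p - 1), ?_, ?_⟩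
    · have := Nat.mod_lt (a - 1) (show 0 < p - 1 by omega)
      omega
    · have h := xg_conj p hp (1 + (a - 1) % (p - 1)) (kap p a) (by omega)
      have e : 1 + (a - 1) % (p - 1) + kap p a * (p - 1) = a := by
        have := Nat.mod_add_div (a - 1) (p - 1)
        unfold kap
        rw [mul_comm ((a - 1) / (p - 1))]
        omega
      rwa [e] at h

theorem isW_sorted (p : ℕ) (hp : 2 ≤ p) (K : ℕ) (L : List ℕ) : ∀ k : ℕ, k ≤ K →
    L.Pairwise (· ≤ ·) → (∀ a ∈ L, k ≤ kap p a) → (∀ a ∈ L, kap p a ≤ K) →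
    IsW p (L.length + (K - k) + K) (xg p 0 ^ k * pr p L) := by
  induction L with
  | nil =>
    intro k hk _ _ _
    rw [pr_nil, mul_one]
    exact ((IsW.gen (by omega)).pow k).mono (by omega)
  | cons a L ih =>
    intro k hk hL h1 h2
    rw [List.pairwise_cons] at hL
    obtain ⟨r, hr, hx⟩ := xg_kap p hp a
    have hka := h1 a (by simp)
    have hkK := h2 a (by simp)
    have IH := ih (kap p a) hkK hL.2
      (fun b hb => Nat.div_le_div_right (by have := hL.1 b hb; omega))
      (fun b hb => h2 b (List.mem_cons_of_mem _ hb))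
    have e : xg p 0 ^ k * pr p (a :: L) =
        (xg p 0 ^ (kap p a - k))⁻¹ * (xg p r * (xg p 0 ^ kap p a * pr p L)) := by
      rw [pr_cons, ← mul_assoc (xg p r), ← hx, eq_inv_mul_iff_mul_eq, ← mul_assoc, ← pow_add,
        Nat.sub_add_cancel hka, mul_assoc]
    rw [e]
    refine (((IsW.gen (by omega)).pow (kap p a - k)).inv.mul ((IsW.gen hr).mul IH)).mono ?_
    simp only [List.length_cons]
    omega

theorem isW_pr_sorted (p : ℕ) (hp : 2 ≤ p) (K : ℕ) (L : List ℕ) (hL : L.Pairwise (· ≤ ·))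
    (hK : ∀ a ∈ L, a ≤ K) : IsW p (L.length + 2 * K) (pr p L) := by
  have := isW_sorted p hp K L 0 (Nat.zero_le _) hL (fun _ _ => Nat.zero_le _)
    (fun a ha => (Nat.div_le_self _ _).trans ((Nat.sub_le _ _).trans (hK a ha)))
  rw [pow_zero, one_mul] at this
  exact this.mono (by omega)

theorem isW_pr (p : ℕ) (hp : 2 ≤ p) (L : List ℕ) : ∃ n, IsW p n (pr p L) := by
  obtain ⟨L', h1, _, h3⟩ := pr_sort p L
  rw [h3]
  exact ⟨_, isW_pr_sorted p hp L'.sum L' h1 (fun a ha => List.le_sum_of_mem ha)⟩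

theorem isW_wlen_self (p : ℕ) (hp : 2 ≤ p) (x : FP p) : IsW p (wlen p x) x := by
  obtain ⟨P, Q, rfl⟩ := exists_frac p x
  obtain ⟨n, hn⟩ := isW_pr p hp P
  obtain ⟨m, hm⟩ := isW_pr p hp Q
  exact isW_wlen (hn.mul hm.inv)

/-! ### Nodes of the infinite forest and the action of the positive monoid on nodes -/

/-- Nodes: a root and a finite word of digits. -/
abbrev Nd (p : ℕ) : Type := ℕ × List (Fin p)

/-- `x_a` acting on nodes -/
def nd (p a : ℕ) (v : Nd p) : Nd p :=
  if v.1 < a then v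
  else if h : v.1 - a < p then (a, ⟨v.1 - a, h⟩ :: v.2)
  else (v.1 - (p - 1), v.2)

theorem nd_lt {p a i : ℕ} (w : List (Fin p)) (h : i < a) : nd p a (i, w) = (i, w) := by
  simp [nd, h]

theorem nd_mid {p a : ℕ} (w : List (Fin p)) (j : Fin p) : nd p a (a + j, w) = (a, j :: w) := by
  simp [nd]

theorem nd_gt {p a i : ℕ} (hp : 2 ≤ p) (w : List (Fin p)) (h : a < i) :
    nd p a (i + (p - 1), w) = (i, w) := by
  have h1 : ¬ (i + (p - 1) < a) := by omega
  have h2 : ¬ (i + (p - 1) - a < p) := by omega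
  simp [nd, h1, h2]

/-- case analysis for a root index -/
theorem root_cases {p : ℕ} (hp : 2 ≤ p) (a i : ℕ) :
    i < a ∨ (∃ j : Fin p, i = a + j) ∨ ∃ k, a < k ∧ i = k + (p - 1) := by
  by_cases h : i < a
  · exact Or.inl h
  · by_cases h2 : i - a < p
    · exact Or.inr (Or.inl ⟨⟨i - a, h2⟩, by simp; omega⟩)
    · exact Or.inr (Or.inr ⟨i - (p - 1), by omega, by omega⟩)

theorem nd_injective {p : ℕ} (hp : 2 ≤ p) (a : ℕ) : Function.Injective (nd p a) := by
  rintro ⟨i, w⟩ ⟨i', w'⟩ h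
  rcases root_cases hp a i with h1 | ⟨j, rfl⟩ | ⟨k, h1, rfl⟩ <;>
  rcases root_cases hp a i' with h2 | ⟨j', rfl⟩ | ⟨k', h2, rfl⟩ <;>
  simp only [nd_lt, nd_mid, nd_gt hp, *, Prod.mk.injEq, List.cons.injEq] at h ⊢ <;>
  first
  | exact h
  | (obtain ⟨h, h'⟩ := h; first | omega | (obtain ⟨rfl, rfl⟩ := h'; exact ⟨rfl, rfl⟩) |
      exact ⟨by omega, h'⟩)

theorem nd_ne {p : ℕ} (hp : 2 ≤ p) (a : ℕ) (v : Nd p) : nd p a v ≠ (a, []) := by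
  obtain ⟨i, w⟩ := v
  intro h
  rcases root_cases hp a i with h1 | ⟨j, rfl⟩ | ⟨k, h1, rfl⟩ <;>
  simp [nd_lt, nd_mid, nd_gt hp, *] at h
  all_goals omega

theorem nd_surj {p : ℕ} (hp : 2 ≤ p) (a : ℕ) (v : Nd p) (hv : v ≠ (a, [])) :
    ∃ u, nd p a u = v := by
  obtain ⟨i, w⟩ := v
  rcases lt_trichotomy i a with h | rfl | h
  · exact ⟨(i, w), nd_lt w h⟩
  · cases w with
    | nil => exact absurd rfl hv
    | cons j w => exact ⟨(i + j, w), nd_mid w j⟩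
  · exact ⟨(i + (p - 1), w), nd_gt hp w h⟩

/-- appending a word to a node -/
def ext {p : ℕ} (v : Nd p) (w : List (Fin p)) : Nd p := (v.1, v.2 ++ w)

theorem nd_ext {p : ℕ} (hp : 2 ≤ p) (a : ℕ) (v : Nd p) (w : List (Fin p)) :
    nd p a (ext v w) = ext (nd p a v) w := by
  obtain ⟨i, u⟩ := v
  simp only [ext]
  rcases root_cases hp a i with h1 | ⟨j, rfl⟩ | ⟨k, h1, rfl⟩ <;>
  simp [nd_lt, nd_mid, nd_gt hp, *]

theorem nd_root {p : ℕ} (hp : 2 ≤ p) (a : ℕ) (v : Nd p) : v.1 ≤ (nd p a v).1 + (p - 1) := by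
  obtain ⟨i, w⟩ := v
  rcases root_cases hp a i with h1 | ⟨j, rfl⟩ | ⟨k, h1, rfl⟩ <;>
  simp [nd_lt, nd_mid, nd_gt hp, *] <;> omega

/-- address of the `l`-th leaf -/
def addr (p : ℕ) : List ℕ → ℕ → Nd p
  | [], l => (l, [])
  | a :: L, l => nd p a (addr p L l)

/-- internal nodes of a forest -/
def nodes (p : ℕ) : List ℕ → List (Nd p)
  | [] => []
  | a :: L => (a, []) :: (nodes p L).map (nd p a)

theorem nodes_length (p : ℕ) (L : List ℕ) : (nodes p L).length = L.length := by
  induction L with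
  | nil => rfl
  | cons a L ih => simp [nodes, ih]

theorem nodes_nodup {p : ℕ} (hp : 2 ≤ p) (L : List ℕ) : (nodes p L).Nodup := by
  induction L with
  | nil => exact List.nodup_nil
  | cons a L ih =>
    rw [nodes, List.nodup_cons]
    refine ⟨?_, ih.map (nd_injective hp a)⟩
    intro h
    obtain ⟨v, _, hv⟩ := List.mem_map.1 h
    exact nd_ne hp a v hv

theorem nodes_root {p : ℕ} (hp : 2 ≤ p) (L : List ℕ) : ∀ a ∈ L, ∃ v ∈ nodes p L,
    a ≤ v.1 + (p - 1) * L.length := by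
  induction L with
  | nil => simp
  | cons b L ih =>
    intro a ha
    rcases List.mem_cons.1 ha with rfl | ha
    · exact ⟨(a, []), by simp [nodes], by simp⟩
    · obtain ⟨v, hv, h⟩ := ih a ha
      refine ⟨nd p b v, List.mem_cons_of_mem _ (List.mem_map_of_mem hv), ?_⟩
      have := nd_root hp b v
      rw [List.length_cons, Nat.mul_succ]
      omega

theorem exists_leaf {p : ℕ} (hp : 2 ≤ p) (B : List ℕ) : ∀ a : ℕ,
    (∀ j : Fin p, (a + (j : ℕ), []) ∉ nodes p B) →
    ∃ l, ∀ j : Fin p, addr p B (l + j) = (a + (j : ℕ), []) := by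
  induction B with
  | nil => intro a _; exact ⟨a, fun j => rfl⟩
  | cons b B ih =>
    intro a h
    have hmem : ∀ v, nd p b v ∉ nodes p (b :: B) → v ∉ nodes p B := fun v hv hv' =>
      hv (List.mem_cons_of_mem _ (List.mem_map_of_mem hv'))
    rcases root_cases hp a b with h1 | ⟨j, rfl⟩ | ⟨k, h1, rfl⟩
    · have e : ∀ j : Fin p, nd p b (a + (p - 1) + (j : ℕ), []) = (a + (j : ℕ), []) := fun j => by
        rw [show a + (p - 1) + (j : ℕ) = a + j + (p - 1) by omega, nd_gt hp _ (by omega)]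
      obtain ⟨l, hl⟩ := ih (a + (p - 1)) (fun j => hmem _ (by rw [e]; exact h j))
      exact ⟨l, fun j => by rw [addr, hl, e]⟩
    · exact absurd (by simp [nodes]) (h j)
    · have e : ∀ j : Fin p, nd p (k + (p - 1)) (a + (j : ℕ), []) = (a + (j : ℕ), []) := fun j =>
        nd_lt _ (by omega)
      obtain ⟨l, hl⟩ := ih a (fun j => hmem _ (by rw [e]; exact h j))
      exact ⟨l, fun j => by rw [addr, hl, e]⟩

theorem move_caret {p : ℕ} (hp : 2 ≤ p) (B : List ℕ) : ∀ a l : ℕ,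
    (∀ j : Fin p, addr p B (l + j) = (a + (j : ℕ), [])) →
    ∃ B' : List ℕ, B'.length = B.length ∧ xg p a * pr p B = pr p B' * xg p l := by
  induction B with
  | nil =>
    intro a l h
    have := h ⟨0, by omega⟩
    simp [addr] at this
    exact ⟨[], rfl, by simp [pr, this]⟩
  | cons b B ih =>
    intro a l h
    rcases root_cases hp a b with h1 | ⟨j, rfl⟩ | ⟨k, h1, rfl⟩
    · have e : ∀ j : Fin p, nd p b (a + (p - 1) + (j : ℕ), []) = (a + (j : ℕ), []) := fun j => by
        rw [show a + (p - 1) + (j : ℕ) = a + j + (p - 1) by omega, nd_gt hp _ (by omega)]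
      obtain ⟨B', h2, h3⟩ := ih (a + (p - 1)) l (fun j => nd_injective hp b (by
        rw [e]; exact h j))
      refine ⟨b :: B', by simp [h2], ?_⟩
      rw [pr_cons, pr_cons, mul_assoc, ← h3, ← mul_assoc, ← mul_assoc, xg_rel p b a h1,
        Nat.add_sub_assoc (by omega)]
    · exact absurd (h j) (nd_ne hp _ _)
    · have e : ∀ j : Fin p, nd p (k + (p - 1)) (a + (j : ℕ), []) = (a + (j : ℕ), []) := fun j =>
        nd_lt _ (by omega)
      obtain ⟨B', h2, h3⟩ := ih a l (fun j => nd_injective hp (k + (p - 1)) (by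
        rw [e]; exact h j))
      refine ⟨k :: B', by simp [h2], ?_⟩
      rw [pr_cons, pr_cons, mul_assoc, ← h3, ← mul_assoc, ← mul_assoc, xg_rel p a k h1,
        Nat.add_sub_assoc (by omega)]

/-- an exposed caret can be split off -/
theorem split_caret {p : ℕ} (hp : 2 ≤ p) (P : List ℕ) (l : ℕ) : ∀ u : Nd p,
    (∀ j : Fin p, addr p P (l + j) = ext u [j]) →
    ∃ P' : List ℕ, P'.length + 1 = P.length ∧ pr p P = pr p P' * xg p l := by
  induction P with
  | nil =>
    intro u h
    have := h ⟨0, by omega⟩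
    simp [addr, ext] at this
  | cons a P ih =>
    intro u h
    by_cases hu : u = (a, [])
    · subst hu
      obtain ⟨B, h1, h2⟩ := move_caret hp P a l (fun j => nd_injective hp a (by
        rw [nd_mid]; exact h j))
      exact ⟨B, by simp [h1], by rw [pr_cons, h2]⟩
    · obtain ⟨u', rfl⟩ := nd_surj hp a u hu
      obtain ⟨P', h1, h2⟩ := ih u' (fun j => nd_injective hp a (by
        rw [nd_ext hp]; exact h j))
      exact ⟨a :: P', by simp [h1], by rw [pr_cons, pr_cons, h2, mul_assoc]⟩

/-- below a node with a hereditary property there is an exposed caret with that property -/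
theorem find_caret {p : ℕ} (hp : 2 ≤ p) (Q : List ℕ) : ∀ G : Nd p → Prop,
    (∀ v w, G v → G (ext v w)) → (∃ v ∈ nodes p Q, G v) →
    ∃ u l, G u ∧ (∀ j : Fin p, addr p Q (l + j) = ext u [j]) := by
  induction Q with
  | nil => rintro G _ ⟨v, hv, _⟩; simp [nodes] at hv
  | cons a Q ih =>
    rintro G hG ⟨v, hv, hGv⟩
    by_cases h : ∃ v ∈ nodes p Q, G (nd p a v)
    · obtain ⟨u, l, h1, h2⟩ := ih (fun v => G (nd p a v))
        (fun v w hv => by rw [nd_ext hp]; exact hG _ _ hv) h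
      exact ⟨nd p a u, l, h1, fun j => by rw [addr, h2, nd_ext hp]⟩
    · push Not at h
      have hva : v = (a, []) := by
        rcases List.mem_cons.1 hv with h' | h'
        · exact h'
        · obtain ⟨v', h3, rfl⟩ := List.mem_map.1 h'
          exact absurd hGv (h v' h3)
      subst hva
      obtain ⟨l, hl⟩ := exists_leaf hp Q a (fun j hj => h _ hj (by
        rw [nd_mid]; exact hG _ [j] hGv))
      exact ⟨_, l, hGv, fun j => by rw [addr, hl, nd_mid]; rfl⟩

/-! ### The action on infinite words -/

/-- points: a root and an infinite word. -/
abbrev Pt (q : ℕ) : Type := ℕ × Stream' (Fin q)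

/-- `x_k` acting on points. -/
def act (q : ℕ) (hq : 2 ≤ q) (k : ℕ) : Equiv.Perm (Pt q) where
  toFun x := if x.1 < k then x
    else if h : x.1 - k < q then (k, Stream'.cons ⟨x.1 - k, h⟩ x.2)
    else (x.1 - (q - 1), x.2)
  invFun x := if x.1 < k then x
    else if x.1 = k then (k + (x.2.head : ℕ), x.2.tail)
    else (x.1 + (q - 1), x.2)
  left_inv := by
    rintro ⟨i, s⟩
    rcases root_cases hq k i with h1 | ⟨j, rfl⟩ | ⟨m, h1, rfl⟩
    · simp [h1]
    · simp
    · have h2 : ¬ (m + (q - 1) < k) := by omega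
      have h3 : ¬ (m + (q - 1) - k < q) := by omega
      have h4 : ¬ (m < k) := by omega
      have h5 : m ≠ k := by omega
      simp [h2, h3, h4, h5]
  right_inv := by
    rintro ⟨i, s⟩
    rcases lt_trichotomy i k with h | rfl | h
    · simp [h]
    · simp [Stream'.eta]
    · have h2 : ¬ (i + (q - 1) < k) := by omega
      have h3 : ¬ (i + (q - 1) - k < q) := by omega
      have h4 : ¬ (i < k) := by omega
      have h5 : i ≠ k := by omega
      simp [h2, h3, h4, h5]

/-- the point in the cone of `v` with tail `s` -/
def app {q : ℕ} (v : Nd q) (s : Stream' (Fin q)) : Pt q := (v.1, v.2 ++ₛ s)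

theorem act_app {q : ℕ} (hq : 2 ≤ q) (k : ℕ) (v : Nd q) (s : Stream' (Fin q)) :
    act q hq k (app v s) = app (nd q k v) s := by
  obtain ⟨i, w⟩ := v
  simp only [act, app, nd, Equiv.coe_fn_mk]
  split_ifs <;> rfl

theorem app_nil {q : ℕ} (i : ℕ) (s : Stream' (Fin q)) : app (i, []) s = (i, s) := rfl

theorem act_rel {q : ℕ} (hq : 2 ≤ q) (i j : ℕ) (h : i < j) :
    act q hq j * act q hq i = act q hq i * act q hq (j + q - 1) := by
  ext1 x
  obtain ⟨m, s⟩ := x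
  rw [Equiv.Perm.mul_apply, Equiv.Perm.mul_apply, ← app_nil, act_app, act_app, act_app, act_app]
  congr 1
  rw [Nat.add_sub_assoc (by omega)]
  rcases root_cases hq i m with h1 | ⟨d, rfl⟩ | ⟨k, h1, rfl⟩
  · rw [nd_lt _ h1, nd_lt (i := m) _ (by omega), nd_lt (i := m) _ (by omega), nd_lt _ h1]
  · rw [nd_mid, nd_lt (i := i) _ (by omega), nd_lt (i := i + (d : ℕ)) _ (by omega), nd_mid]
  · rw [nd_gt hq _ h1]
    rcases root_cases hq j k with h2 | ⟨d, rfl⟩ | ⟨k, h2, rfl⟩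
    · rw [nd_lt (i := k) _ (by omega), nd_lt (i := k + (q - 1)) _ (by omega), nd_gt hq _ h1]
    · rw [nd_mid, show j + (d : ℕ) + (q - 1) = j + (q - 1) + (d : ℕ) by omega, nd_mid,
        nd_gt hq _ h]
    · rw [nd_gt hq _ h2, nd_gt hq _ (by omega), nd_gt hq _ (by omega)]

/-- the action of `F(q)` on points -/
def actHom (q : ℕ) (hq : 2 ≤ q) : FP q →* Equiv.Perm (Pt q) :=
  FPlift q (act q hq) (act_rel hq)

theorem actHom_xg {q : ℕ} (hq : 2 ≤ q) (k : ℕ) (v : Nd q) (s : Stream' (Fin q)) :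
    actHom q hq (xg q k) (app v s) = app (nd q k v) s := by
  rw [actHom, FPlift_xg, act_app]

theorem list_app_injective {q : ℕ} (hq : 2 ≤ q) (w : List (Fin q)) : ∀ w' : List (Fin q),
    (∀ s : Stream' (Fin q), w ++ₛ s = w' ++ₛ s) → w = w' := by
  have key : ∀ (c : Fin q) (w : List (Fin q)), ¬ ∀ s : Stream' (Fin q), s = (c :: w) ++ₛ s := by
    intro c w h
    have h0 := congrArg Stream'.head (h (Stream'.const ⟨0, by omega⟩))
    have h1 := congrArg Stream'.head (h (Stream'.const ⟨1, by omega⟩))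
    simp only [Stream'.cons_append_stream, Stream'.head_cons] at h0 h1
    have := h0.trans h1.symm
    simp [Stream'.const, Stream'.head, Stream'.get] at this
  induction w with
  | nil =>
    intro w' h
    cases w' with
    | nil => rfl
    | cons c w' => exact absurd h (key c w')
  | cons d w ih =>
    intro w' h
    cases w' with
    | nil => exact absurd (fun s => (h s).symm) (key d w)
    | cons c w' =>
      have hd : d = c := by
        have := congrArg Stream'.head (h (Stream'.const ⟨0, by omega⟩))
        simpa only [Stream'.cons_append_stream, Stream'.head_cons] using this
      have ht : w = w' := ih w' (fun s => by
        have := congrArg Stream'.tail (h s)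
        simpa only [Stream'.cons_append_stream, Stream'.tail_cons] using this)
      rw [hd, ht]

theorem app_injective {q : ℕ} (hq : 2 ≤ q) {v v' : Nd q} (h : ∀ s, app v s = app v' s) :
    v = v' := by
  obtain ⟨i, w⟩ := v
  obtain ⟨i', w'⟩ := v'
  have h1 := (Prod.mk.inj (h (Stream'.const ⟨0, by omega⟩))).1
  have h2 := list_app_injective hq w w' (fun s => (Prod.mk.inj (h s)).2)
  simp at h1
  rw [h1, h2]

theorem app_ext {q : ℕ} (v : Nd q) (w : List (Fin q)) (s : Stream' (Fin q)) :
    app (ext v w) s = app v (w ++ₛ s) := by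
  simp [app, ext]

/-- `f` maps the cone of `v` to the cone of `v'`. -/
def Maps {q : ℕ} (f : Equiv.Perm (Pt q)) (v v' : Nd q) : Prop := ∀ s, f (app v s) = app v' s

theorem Maps.ext {q : ℕ} {f : Equiv.Perm (Pt q)} {v v' : Nd q} (h : Maps f v v')
    (w : List (Fin q)) : Maps f (ext v w) (ext v' w) := fun s => by
  rw [app_ext, app_ext]; exact h _

theorem Maps.unique {q : ℕ} (hq : 2 ≤ q) {f : Equiv.Perm (Pt q)} {v v' v'' : Nd q}
    (h : Maps f v v') (h' : Maps f v v'') : v' = v'' :=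
  app_injective hq (fun s => (h s).symm.trans (h' s))

theorem Maps.inj {q : ℕ} (hq : 2 ≤ q) {f : Equiv.Perm (Pt q)} {v v' u : Nd q}
    (h : Maps f v u) (h' : Maps f v' u) : v = v' :=
  app_injective hq (fun s => f.injective ((h s).trans (h' s).symm))

theorem Maps.mul {q : ℕ} {f g : Equiv.Perm (Pt q)} {u v w : Nd q}
    (h : Maps f v w) (h' : Maps g u v) : Maps (f * g) u w := fun s => by
  rw [Equiv.Perm.mul_apply, h', h]

theorem Maps.inv {q : ℕ} {f : Equiv.Perm (Pt q)} {u v : Nd q}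
    (h : Maps f u v) : Maps f⁻¹ v u := fun s => by
  rw [Equiv.Perm.inv_eq_iff_eq, h]

theorem maps_xg {q : ℕ} (hq : 2 ≤ q) (k : ℕ) (v : Nd q) :
    Maps (actHom q hq (xg q k)) v (nd q k v) := actHom_xg hq k v

/-- number of bad nodes is bounded by the length -/
theorem bad_bound {q : ℕ} (hq : 2 ≤ q) {n : ℕ} {y : FP q} (h : IsW q n y) :
    ∃ B : Finset (Nd q), B.card ≤ n ∧ ∀ v, v ∉ B → ∃ v', Maps (actHom q hq y) v v' := by
  classical
  refine IsW.induction (C := fun n y => ∃ B : Finset (Nd q), B.card ≤ n ∧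
    ∀ v, v ∉ B → ∃ v', Maps (actHom q hq y) v v') ?_ ?_ ?_ ?_ h
  · exact ⟨∅, by simp, fun v _ => ⟨v, fun s => by simp⟩⟩
  · rintro n x ⟨B, h1, h2⟩
    exact ⟨B, by omega, h2⟩
  · rintro n i x _ ⟨B, h1, h2⟩
    refine ⟨B, by omega, fun v hv => ?_⟩
    obtain ⟨v', hv'⟩ := h2 v hv
    rw [map_mul]
    exact ⟨_, (maps_xg hq i v').mul hv'⟩
  · rintro n i x _ ⟨B, h1, h2⟩
    have key : ∀ v v', Maps (actHom q hq x) v v' → v' ≠ (i, []) →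
        ∃ v'', Maps (actHom q hq ((xg q i)⁻¹ * x)) v v'' := by
      intro v v' hv hv'
      obtain ⟨u, rfl⟩ := nd_surj hq i v' hv'
      rw [map_mul, map_inv]
      exact ⟨u, (maps_xg hq i u).inv.mul hv⟩
    by_cases hb : ∃ v, Maps (actHom q hq x) v (i, [])
    · obtain ⟨b, hb⟩ := hb
      refine ⟨insert b B, (Finset.card_insert_le _ _).trans (by omega), fun v hv => ?_⟩
      rw [Finset.mem_insert, not_or] at hv
      obtain ⟨v', hv'⟩ := h2 v hv.2
      refine key v v' hv' ?_
      rintro rfl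
      exact hv.1 (hv'.inj hq hb)
    · refine ⟨B, by omega, fun v hv => ?_⟩
      obtain ⟨v', hv'⟩ := h2 v hv
      refine key v v' hv' ?_
      rintro rfl
      exact hb ⟨v, hv'⟩

theorem root_bound {q : ℕ} (hq : 2 ≤ q) {n : ℕ} {y : FP q} (h : IsW q n y) :
    ∀ i, 2 * q * n ≤ i → ∃ i', i ≤ i' + q * n ∧ Maps (actHom q hq y) (i, []) (i', []) := by
  refine IsW.induction (C := fun n y => ∀ i, 2 * q * n ≤ i → ∃ i', i ≤ i' + q * n ∧
    Maps (actHom q hq y) (i, []) (i', [])) ?_ ?_ ?_ ?_ h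
  · exact fun i _ => ⟨i, by simp, fun s => by simp⟩
  · intro n x h i hi
    rw [Nat.mul_succ] at hi
    obtain ⟨i', h1, h2⟩ := h i (by omega)
    exact ⟨i', by rw [Nat.mul_succ]; omega, h2⟩
  · intro n k x hk h i hi
    rw [Nat.mul_succ] at hi
    obtain ⟨i', h1, h2⟩ := h i (by omega)
    have e : nd q k (i' - (q - 1) + (q - 1), []) = (i' - (q - 1), []) := by
      refine nd_gt hq _ ?_
      have : q * n ≤ 2 * q * n := Nat.mul_le_mul_right _ (by omega)
      have : 2 * q * n = q * n + q * n := by ring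
      omega
    have : 2 * q * n = q * n + q * n := by ring
    rw [Nat.sub_add_cancel (by omega)] at e
    refine ⟨i' - (q - 1), by rw [Nat.mul_succ]; omega, ?_⟩
    rw [map_mul]
    have := (maps_xg hq k (i', [])).mul h2
    rwa [e] at this
  · intro n k x hk h i hi
    rw [Nat.mul_succ] at hi
    obtain ⟨i', h1, h2⟩ := h i (by omega)
    have : 2 * q * n = q * n + q * n := by ring
    have e : nd q k (i' + (q - 1), []) = (i', []) := nd_gt hq _ (by omega)
    refine ⟨i' + (q - 1), by rw [Nat.mul_succ]; omega, ?_⟩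
    rw [map_mul, map_inv]
    have h3 := maps_xg hq k (i' + (q - 1), [])
    rw [e] at h3
    exact h3.inv.mul h2

/-! ### The embedding -/

/-- the codeword of a digit -/
def code (p q : ℕ) (hq : 2 ≤ q) (j : Fin p) : List (Fin q) :=
  if (j : ℕ) = 0 then List.replicate (p - 1) ⟨0, by omega⟩
  else List.replicate (p - 1 - j) ⟨0, by omega⟩ ++ [⟨q - 1, by omega⟩]

/-- the encoding of a node -/
def hat {p q : ℕ} (hq : 2 ≤ q) (v : Nd p) : Nd q := ((q - 1) * v.1, v.2.flatMap (code p q hq))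

theorem hat_ext {p q : ℕ} (hq : 2 ≤ q) (v : Nd p) (w : List (Fin p)) :
    hat hq (ext v w) = ext (hat hq v) (w.flatMap (code p q hq)) := by
  simp [hat, ext]

theorem code_prefix {p q : ℕ} (hq : 2 ≤ q) (a b : Fin p) (X Y : List (Fin q))
    (h : code p q hq a ++ X = code p q hq b ++ Y) : a = b := by
  have hz : (⟨0, by omega⟩ : Fin q) ≠ ⟨q - 1, by omega⟩ := by
    simp only [ne_eq, Fin.mk.injEq]; omega
  have key : ∀ (m m' : ℕ) (X Y : List (Fin q)), m < m' →
      List.replicate m' (⟨0, by omega⟩ : Fin q) ++ X ≠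
        List.replicate m ⟨0, by omega⟩ ++ (⟨q - 1, by omega⟩ :: Y) := by
    intro m m' X Y hm h
    have h' := congrArg (fun l => l[m]?) h
    simp only [] at h'
    rw [List.getElem?_append_left (by simpa using hm),
      List.getElem?_append_right (by simp)] at h'
    simp only [List.length_replicate, Nat.sub_self, List.getElem?_cons_zero,
      List.getElem?_replicate, hm, if_true, Option.some.injEq] at h'
    exact hz h'
  unfold code at h
  split_ifs at h with h1 h2 h2
  · exact Fin.ext (by omega)
  · rw [List.append_assoc] at h
    exact absurd h (key _ _ _ _ (by omega))
  · rw [List.append_assoc] at h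
    exact absurd h.symm (key _ _ _ _ (by omega))
  · rw [List.append_assoc, List.append_assoc] at h
    rcases lt_trichotomy (a : ℕ) b with h3 | h3 | h3
    · exact absurd h (key _ _ _ _ (by omega))
    · exact Fin.ext h3
    · exact absurd h.symm (key _ _ _ _ (by omega))

theorem code_ne_nil {p q : ℕ} (hp : 2 ≤ p) (hq : 2 ≤ q) (a : Fin p) : code p q hq a ≠ [] := by
  unfold code
  split_ifs
  · simp; omega
  · simp

theorem flat_injective {p q : ℕ} (hp : 2 ≤ p) (hq : 2 ≤ q) (u : List (Fin p)) :
    ∀ v : List (Fin p), u.flatMap (code p q hq) = v.flatMap (code p q hq) → u = v := by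
  induction u with
  | nil =>
    intro v h
    cases v with
    | nil => rfl
    | cons b v =>
      rw [List.flatMap_nil, List.flatMap_cons] at h
      exact absurd (List.append_eq_nil_iff.1 h.symm).1 (code_ne_nil hp hq b)
  | cons a u ih =>
    intro v h
    cases v with
    | nil =>
      rw [List.flatMap_nil, List.flatMap_cons] at h
      exact absurd (List.append_eq_nil_iff.1 h).1 (code_ne_nil hp hq a)
    | cons b v =>
      rw [List.flatMap_cons, List.flatMap_cons] at h
      have hab := code_prefix hq a b _ _ h
      subst hab
      rw [ih v (List.append_cancel_left h)]

theorem hat_injective {p q : ℕ} (hp : 2 ≤ p) (hq : 2 ≤ q) :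
    Function.Injective (hat hq : Nd p → Nd q) := by
  rintro ⟨i, u⟩ ⟨j, v⟩ h
  simp only [hat, Prod.mk.injEq] at h
  rw [flat_injective hp hq u v h.2, Nat.eq_of_mul_eq_mul_left (by omega) h.1]

/-- number of trailing zeros -/
def tz {q : ℕ} (w : List (Fin q)) : ℕ := (w.reverse.takeWhile (fun d => d.val == 0)).length

theorem tz_zeros {q : ℕ} (hq : 2 ≤ q) (w : List (Fin q)) (m : ℕ) :
    tz (w ++ List.replicate m ⟨0, by omega⟩) = tz w + m := by
  induction m with
  | zero => simp
  | succ m ih =>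
    rw [List.replicate_succ', ← List.append_assoc, ← add_assoc, ← ih]
    simp [tz]

theorem tz_last {q : ℕ} (hq : 2 ≤ q) (w : List (Fin q)) :
    tz (w ++ [⟨q - 1, by omega⟩]) = 0 := by
  have : q - 1 ≠ 0 := by omega
  simp [tz, this]

theorem tz_flat {p q : ℕ} (hq : 2 ≤ q) (u : List (Fin p)) :
    (p - 1) ∣ tz (u.flatMap (code p q hq)) := by
  induction u using List.reverseRecOn with
  | nil => simp [tz]
  | append_singleton u a ih =>
    rw [List.flatMap_append, List.flatMap_singleton]
    unfold code at ih ⊢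
    by_cases h : (a : ℕ) = 0
    · rw [if_pos h, tz_zeros hq]
      exact (Nat.dvd_add_left (dvd_refl _)).2 ih
    · rw [if_neg h, ← List.append_assoc, tz_last hq]
      exact dvd_zero _

theorem decode_list {p q : ℕ} (hp : 2 ≤ p) (hq : 2 ≤ q) (W : List (Fin q)) (u u' : List (Fin p))
    (h1 : u.flatMap (code p q hq) = W ++ [⟨q - 1, by omega⟩])
    (h2 : u'.flatMap (code p q hq) = W ++ List.replicate (p - 1) ⟨0, by omega⟩) :
    ∃ a : List (Fin p), W = a.flatMap (code p q hq) := by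
  have hz : (⟨0, by omega⟩ : Fin q) ≠ ⟨q - 1, by omega⟩ := by
    simp only [ne_eq, Fin.mk.injEq]; omega
  have hW : (p - 1) ∣ tz W := by
    have := tz_flat hq u'
    rw [h2, tz_zeros hq] at this
    exact (Nat.dvd_add_left (dvd_refl _)).1 this
  induction u using List.reverseRecOn with
  | nil => simp at h1
  | append_singleton u c _ =>
    have hu := tz_flat hq u
    rw [List.flatMap_append, List.flatMap_singleton] at h1
    by_cases hc : (c : ℕ) = 0
    · have h3 := congrArg tz h1
      rw [tz_last hq] at h3
      rw [code, if_pos hc, tz_zeros hq] at h3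
      omega
    · rw [code, if_neg hc, ← List.append_assoc] at h1
      have h3 := List.append_cancel_right h1
      rw [← h3, tz_zeros hq, Nat.dvd_add_right hu] at hW
      have hm : p - 1 - (c : ℕ) = 0 := Nat.eq_zero_of_dvd_of_lt hW (by omega)
      rw [hm] at h3
      exact ⟨u, by rw [← h3]; simp⟩

theorem decode {p q : ℕ} (hp : 2 ≤ p) (hq : 2 ≤ q) (A : Nd q) (u : Fin p → Nd p)
    (h : ∀ j, hat hq (u j) = ext A (code p q hq j)) :
    ∃ a : Nd p, ∀ j, u j = ext a [j] := by
  have h0 := h ⟨0, by omega⟩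
  have h1 := h ⟨p - 1, by omega⟩
  simp only [hat, ext, Prod.mk.injEq] at h0 h1
  have hp1 : p - 1 ≠ 0 := by omega
  obtain ⟨a, ha⟩ := decode_list hp hq A.2 _ _
    (by rw [h1.2]; simp [code, hp1]) (by rw [h0.2]; simp [code])
  refine ⟨((u ⟨0, by omega⟩).1, a), fun j => hat_injective hp hq ?_⟩
  rw [h j, hat_ext]
  simp [ext, hat, h0.1, ha]

/-! Iterating a generator of `F(q)`. -/

theorem iter_lt {q : ℕ} {a i : ℕ} (w : List (Fin q)) (h : i < a) (m : ℕ) :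
    (nd q a)^[m] (i, w) = (i, w) :=
  Function.iterate_fixed (nd_lt w h) m

theorem iter_zero {q : ℕ} (hq : 2 ≤ q) (a : ℕ) (m : ℕ) (w : List (Fin q)) :
    (nd q a)^[m] (a, w) = (a, List.replicate m ⟨0, by omega⟩ ++ w) := by
  induction m with
  | zero => rfl
  | succ m ih =>
    rw [Function.iterate_succ_apply', ih]
    exact nd_mid (a := a) _ ⟨0, by omega⟩

theorem iter_gt {q : ℕ} (hq : 2 ≤ q) (k c m : ℕ) (w : List (Fin q)) :
    (nd q ((q - 1) * k))^[m] ((q - 1) * (k + 1 + c + m), w) = ((q - 1) * (k + 1 + c), w) := by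
  induction m with
  | zero => rfl
  | succ m ih =>
    rw [Function.iterate_succ_apply, ← ih]
    congr 1
    rw [show (q - 1) * (k + 1 + c + (m + 1)) = (q - 1) * (k + 1 + c + m) + (q - 1) by ring]
    refine nd_gt hq _ (Nat.mul_lt_mul_of_pos_left (by omega) (by omega))

theorem iter_hat {p q : ℕ} (hp : 2 ≤ p) (hq : 2 ≤ q) (k : ℕ) (v : Nd p) :
    (nd q ((q - 1) * k))^[p - 1] (hat hq v) = hat hq (nd p k v) := by
  obtain ⟨i, w⟩ := v
  rcases root_cases hp k i with h1 | ⟨j, rfl⟩ | ⟨m, h1, rfl⟩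
  · rw [nd_lt _ h1]
    exact iter_lt _ (Nat.mul_lt_mul_of_pos_left h1 (by omega)) _
  · rw [nd_mid]
    simp only [hat, List.flatMap_cons]
    by_cases hj : (j : ℕ) = 0
    · rw [hj, add_zero, iter_zero hq]
      simp [code, hj]
    · have e : p - 1 = (p - 1 - j) + 1 + (j - 1) := by omega
      have e2 : k + (j : ℕ) = k + 1 + 0 + ((j : ℕ) - 1) := by omega
      conv_lhs => rw [e]
      rw [Function.iterate_add_apply, Function.iterate_add_apply, e2, iter_gt hq,
        Function.iterate_one]
      have := nd_mid (a := (q - 1) * k) (w.flatMap (code p q hq)) (⟨q - 1, by omega⟩ : Fin q)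
      rw [show (q - 1) * (k + 1 + 0) = (q - 1) * k + (q - 1) by ring]
      simp only at this
      rw [this, iter_zero hq]
      simp [code, hj]
  · rw [nd_gt hp _ h1]
    obtain ⟨c, rfl⟩ : ∃ c, m = k + 1 + c := ⟨m - (k + 1), by omega⟩
    exact iter_gt hq k c (p - 1) _

theorem xg_rel_pow {q : ℕ} (hq : 2 ≤ q) (a b m : ℕ) (h : a < b) :
    xg q b * xg q a ^ m = xg q a ^ m * xg q (b + m * (q - 1)) := by
  induction m with
  | zero => simp
  | succ m ih =>
    rw [pow_succ, ← mul_assoc, ih, mul_assoc, mul_assoc, xg_rel q a _ (by omega)]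
    congr 3
    rw [Nat.succ_mul]
    omega

/-- The embedding `x_i ↦ x_{(q-1)i}^{p-1}`. -/
def Psi (p q : ℕ) (hp : 2 ≤ p) (hq : 2 ≤ q) : FP p →* FP q :=
  FPlift p (fun i => xg q ((q - 1) * i) ^ (p - 1)) (by
    intro i j h
    have h1 := xg_rel_pow hq ((q - 1) * i) ((q - 1) * j) (p - 1)
      (Nat.mul_lt_mul_of_pos_left h (by omega))
    rw [show (q - 1) * j + (p - 1) * (q - 1) = (q - 1) * (j + p - 1) by
      rw [Nat.add_sub_assoc (by omega)]; ring] at h1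
    have h2 : SemiconjBy (xg q ((q - 1) * i) ^ (p - 1)) (xg q ((q - 1) * (j + p - 1)))
      (xg q ((q - 1) * j)) := h1.symm
    exact (h2.pow_right (p - 1)).symm)

theorem maps_Psi_pr {p q : ℕ} (hp : 2 ≤ p) (hq : 2 ≤ q) (L : List ℕ) (l : ℕ) :
    Maps (actHom q hq (Psi p q hp hq (pr p L))) (hat hq ((l, []) : Nd p))
      (hat hq (addr p L l)) := by
  have hpow : ∀ (k m : ℕ) (v : Nd q), Maps (actHom q hq (xg q k ^ m)) v ((nd q k)^[m] v) := by
    intro k m v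
    induction m with
    | zero => intro s; simp
    | succ m ih =>
      rw [pow_succ', map_mul, Function.iterate_succ_apply']
      exact (maps_xg hq k _).mul ih
  induction L with
  | nil => intro s; simp [pr_nil, addr]
  | cons a L ih =>
    rw [pr_cons, map_mul, map_mul, addr, ← iter_hat hp hq]
    refine Maps.mul ?_ ih
    rw [Psi, FPlift_xg]
    exact hpow _ _ _

/-- minimal fractions -/
def IsMinFrac (p : ℕ) (x : FP p) (P Q : List ℕ) : Prop :=
  x = pr p P * (pr p Q)⁻¹ ∧ ∀ P' Q' : List ℕ, x = pr p P' * (pr p Q')⁻¹ →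
    P.length + Q.length ≤ P'.length + Q'.length

theorem IsMinFrac.inv {p : ℕ} {x : FP p} {P Q : List ℕ} (h : IsMinFrac p x P Q) : IsMinFrac p x⁻¹ Q P := by
  refine ⟨by rw [h.1]; group, fun P' Q' h' => ?_⟩
  have := h.2 Q' P' (by rw [← inv_inv x, h']; group)
  omega

theorem exists_min (p : ℕ) (x : FP p) : ∃ P Q : List ℕ, IsMinFrac p x P Q ∧
    P.Pairwise (· ≤ ·) ∧ Q.Pairwise (· ≤ ·) := by
  classical
  have hex : ∃ n, ∃ P Q : List ℕ, x = pr p P * (pr p Q)⁻¹ ∧ P.length + Q.length = n := by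
    obtain ⟨P, Q, h⟩ := exists_frac p x
    exact ⟨_, P, Q, h, rfl⟩
  obtain ⟨P, Q, h1, h2⟩ := Nat.find_spec hex
  obtain ⟨P', h3, h4, h5⟩ := pr_sort p P
  obtain ⟨Q', h6, h7, h8⟩ := pr_sort p Q
  refine ⟨P', Q', ⟨by rw [h1, h5, h8], fun P'' Q'' h => ?_⟩, h3, h6⟩
  rw [h4, h7, h2]
  exact Nat.find_min' hex ⟨P'', Q'', h, rfl⟩

theorem min_bad {p q : ℕ} (hp : 2 ≤ p) (hq : 2 ≤ q) {x : FP p} {P Q : List ℕ}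
    (h : IsMinFrac p x P Q) (v : Nd p) (hv : v ∈ nodes p Q) (v' : Nd q) :
    ¬ Maps (actHom q hq (Psi p q hp hq x)) (hat hq v) v' := by
  intro hm
  obtain ⟨u, l, ⟨A, hA⟩, hQ⟩ := find_caret hp Q
    (fun v => ∃ v', Maps (actHom q hq (Psi p q hp hq x)) (hat hq v) v')
    (fun v w ⟨v', h⟩ => ⟨_, by rw [hat_ext]; exact h.ext _⟩) ⟨v, hv, v', hm⟩
  have hx : ∀ l, Maps (actHom q hq (Psi p q hp hq x)) (hat hq (addr p Q l))
      (hat hq (addr p P l)) := by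
    intro l
    rw [h.1, map_mul, map_mul, map_inv, map_inv]
    exact (maps_Psi_pr hp hq P l).mul (maps_Psi_pr hp hq Q l).inv
  obtain ⟨a, ha⟩ := decode hp hq A (fun j => addr p P (l + j)) (fun j => by
    have h1 := hx (l + j)
    have h2 := hA.ext (code p q hq j)
    rw [hQ, hat_ext, List.flatMap_singleton] at h1
    exact h1.unique hq h2)
  obtain ⟨P', hP1, hP2⟩ := split_caret hp P l a ha
  obtain ⟨Q', hQ1, hQ2⟩ := split_caret hp Q l u hQ
  have := h.2 P' Q' (by rw [h.1, hP2, hQ2]; group)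
  omega

theorem min_bound {p q : ℕ} (hp : 2 ≤ p) (hq : 2 ≤ q) {x : FP p} {P Q : List ℕ}
    (h : IsMinFrac p x P Q) {n : ℕ} (hn : IsW q n (Psi p q hp hq x)) :
    Q.length ≤ n ∧ ∀ a ∈ Q, a ≤ (p - 1) * n + 2 * q * n := by
  classical
  have hlen : Q.length ≤ n := by
    obtain ⟨B, hB, hgood⟩ := bad_bound hq hn
    have hnd : ((nodes p Q).map (hat hq)).Nodup := (nodes_nodup hp Q).map (hat_injective hp hq)
    have hsub : ((nodes p Q).map (hat hq)).toFinset ⊆ B := by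
      intro u hu
      rw [List.mem_toFinset, List.mem_map] at hu
      obtain ⟨v, hv, rfl⟩ := hu
      by_contra hB
      obtain ⟨v', hv'⟩ := hgood _ hB
      exact min_bad hp hq h v hv v' hv'
    have := Finset.card_le_card hsub
    rw [List.toFinset_card_of_nodup hnd, List.length_map, nodes_length] at this
    omega
  refine ⟨hlen, fun a ha => ?_⟩
  obtain ⟨v, hv, hva⟩ := nodes_root hp Q a ha
  have h1 : (p - 1) * Q.length ≤ (p - 1) * n := Nat.mul_le_mul_left _ hlen
  by_contra hlt
  have h2 : 2 * q * n ≤ v.1 := by omega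
  have h3 : v.1 ≤ (q - 1) * v.1 := Nat.le_mul_of_pos_left _ (by omega)
  obtain ⟨i', _, hi'⟩ := root_bound hq hn ((q - 1) * v.1) (h2.trans h3)
  have h4 := hi'.ext (v.2.flatMap (code p q hq))
  exact min_bad hp hq h v hv _ h4

theorem lower_bound {p q : ℕ} (hp : 2 ≤ p) (hq : 2 ≤ q) (x : FP p) :
    wlen p x ≤ (2 + 4 * ((p - 1) + 2 * q)) * wlen q (Psi p q hp hq x) := by
  obtain ⟨P, Q, h, hP, hQ⟩ := exists_min p x
  have hn := isW_wlen_self q hq (Psi p q hp hq x)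
  generalize wlen q (Psi p q hp hq x) = n at hn ⊢
  obtain ⟨h1, h2⟩ := min_bound hp hq h hn
  obtain ⟨h3, h4⟩ := min_bound hp hq h.inv (by rw [map_inv]; exact hn.inv)
  have hPw := isW_pr_sorted p hp _ P hP h4
  have hQw := isW_pr_sorted p hp _ Q hQ h2
  have hw := hPw.mul hQw.inv
  rw [← h.1] at hw
  refine (wlen_le_of_isW hw).trans ?_
  have : (2 + 4 * ((p - 1) + 2 * q)) * n = 2 * n + 4 * ((p - 1) * n + 2 * q * n) := by ring
  omega

theorem upper_bound {p q : ℕ} (hp : 2 ≤ p) (hq : 2 ≤ q) (f : FP p →* FP q) :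
    ∃ K : ℕ, ∀ x : FP p, wlen q (f x) ≤ K * wlen p x := by
  refine ⟨∑ i ∈ Finset.range p, wlen q (f (xg p i)), fun x => ?_⟩
  set K := ∑ i ∈ Finset.range p, wlen q (f (xg p i)) with hK
  have hle : ∀ i, i < p → IsW q K (f (xg p i)) := fun i hi =>
    (isW_wlen_self q hq (f (xg p i))).mono
      (Finset.single_le_sum (f := fun i => wlen q (f (xg p i))) (fun _ _ => Nat.zero_le _)
        (Finset.mem_range.2 hi))
  refine wlen_le_of_isW (IsW.induction (C := fun n x => IsW q (K * n) (f x)) ?_ ?_ ?_ ?_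
    (isW_wlen_self p hp x))
  · rw [map_one]; exact IsW.one
  · exact fun n x h => h.mono (Nat.mul_le_mul_left _ (Nat.le_succ n))
  · intro n i x hi h
    rw [map_mul]
    exact ((hle i hi).mul h).mono (by rw [Nat.mul_succ]; omega)
  · intro n i x hi h
    rw [map_mul, map_inv]
    exact ((hle i hi).inv.mul h).mono (by rw [Nat.mul_succ]; omega)

/-- Theorem 10. For any `p, q ≥ 2` there is an injective group
homomorphism `Ψ : F(p) → F(q)` which is a quasi-isometric embedding. -/
theorem statement6 (p q : ℕ) (hp : 2 ≤ p) (hq : 2 ≤ q) :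
    ∃ Ψ : FP p →* FP q, Function.Injective Ψ ∧
      ∃ C : ℝ, 1 ≤ C ∧ ∀ x : FP p,
        (1 / C) * (wlen p x : ℝ) ≤ (wlen q (Ψ x) : ℝ) ∧
          (wlen q (Ψ x) : ℝ) ≤ C * (wlen p x : ℝ) := by
  refine ⟨Psi p q hp hq, ?_, ?_⟩
  · rw [injective_iff_map_eq_one]
    intro x hx
    have h := lower_bound hp hq x
    have h0 : wlen q (Psi p q hp hq x) = 0 := by
      rw [hx]
      exact Nat.le_zero.1 (wlen_le_of_isW IsW.one)
    rw [h0, mul_zero, Nat.le_zero] at h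
    have hw := isW_wlen_self p hp x
    rw [h] at hw
    obtain ⟨w, h1, _, rfl⟩ := hw
    rw [List.length_eq_zero_iff.1 (Nat.le_zero.1 h1)]
    rfl
  · obtain ⟨K, hK⟩ := upper_bound hp hq (Psi p q hp hq)
    set L := 2 + 4 * ((p - 1) + 2 * q) with hL
    refine ⟨((K + L : ℕ) : ℝ), by exact_mod_cast (by omega : 1 ≤ K + L), fun x => ⟨?_, ?_⟩⟩
    · have h1 : wlen p x ≤ (K + L) * wlen q (Psi p q hp hq x) :=
        (lower_bound hp hq x).trans (Nat.mul_le_mul_right _ (by omega))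
      have hpos : (0 : ℝ) < ((K + L : ℕ) : ℝ) := by exact_mod_cast (by omega : 0 < K + L)
      rw [one_div, inv_mul_le_iff₀ hpos]
      exact_mod_cast h1
    · have h1 : wlen q (Psi p q hp hq x) ≤ (K + L) * wlen p x :=
        (hK x).trans (Nat.mul_le_mul_right _ (by omega))
      exact_mod_cast h1
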